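/- The set of singular points of the sextic surface F₁·S₂,₃,₄,₅,₆ − S³ = 0 in ℙ³(ℂ) equals the set {[x] ∈ ℙ³(ℂ) : F₁(x) = S₂,₃,₄,₅,₆(x) = S(x) = 0}, and this set has exactly 10 elements. -/

import Mathlib

/-!
At a point of `F₁ = S₂,₃,₄,₅,₆ = S = 0` the gradient of `F₁S₂,₃,₄,₅,₆ − S³` vanishes, and conversely
a singular point on the plane `F₁ = 0` satisfies the other two equations. It remains to see that
there is no singular point off this plane. The sextic has integer coefficients, so choose a
valuation ring of `ℂ` with residue characteristic `19` and scale a singular point to primitive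
coordinates. In characteristic `19` an explicit Nullstellensatz certificate, whose coefficients are
far smaller than those of one over `ℚ`, shows that the reduction lies on `F₁ = 0`, hence in the base
locus. There `(y₂ + y₃)∂₁S₂,₃,₄,₅,₆ ≠ 0`, while the combination `(y₂ + y₃)∂₁ + y₀(∂₂ + ∂₃)`,
which kills `S`, shows that `y₀` times a lift of this unit is zero. So `y₀ = 0` at the singular
point itself.

On `y₀ = 0` the quadric splits into two lines, and the quintic restricts to a binary quintic with
five simple roots on each of them. None of these roots is the common point of the lines, which gives
`2 · 5` points.
-/

open MvPolynomial

/-- The quadric `S = y₀·y₁ − y₂·y₃`. -/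
noncomputable def polyS : MvPolynomial (Fin 4) ℂ := X 0 * X 1 - X 2 * X 3

/-- The six linear forms `F₁, …, F₆` (indexed by `Fin 6`). -/
noncomputable def polyF : Fin 6 → MvPolynomial (Fin 4) ℂ :=
  ![X 0,
    X 1,
    4 * X 0 - 2 * X 2 - 2 * X 3 + X 1,
    X 0 - 2 * X 2 - 2 * X 3 + 4 * X 1,
    X 0 + X 2 + X 3 + X 1,
    X 0 - X 2 - X 3 + X 1]
/-- The quadric `R = y₀² + y₁² + y₂² + y₃²`. -/
noncomputable def polyR : MvPolynomial (Fin 4) ℂ := X 0 ^ 2 + X 1 ^ 2 + X 2 ^ 2 + X 3 ^ 2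

/-- The linear form `R₁ = y₀ + 2y₂ + 3y₃ + 4y₁`. -/
noncomputable def polyR1 : MvPolynomial (Fin 4) ℂ := X 0 + 2 * X 2 + 3 * X 3 + 4 * X 1

/-- The linear form `R₂ = 4y₀ + 3y₂ + 2y₃ + y₁`. -/
noncomputable def polyR2 : MvPolynomial (Fin 4) ℂ := 4 * X 0 + 3 * X 2 + 2 * X 3 + X 1

noncomputable def polyS12 : MvPolynomial (Fin 4) ℂ := polyF 0 * polyF 1 + 2 * polyS
noncomputable def polyS23 : MvPolynomial (Fin 4) ℂ := polyF 1 * polyF 2 + 2 * polyS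
noncomputable def polyS34 : MvPolynomial (Fin 4) ℂ := polyF 2 * polyF 3 + 2 * polyS
noncomputable def polyS56 : MvPolynomial (Fin 4) ℂ := polyF 4 * polyF 5 + 2 * polyS
noncomputable def polyS123 : MvPolynomial (Fin 4) ℂ := polyF 0 * polyF 1 * polyF 2 + polyS * polyR1
noncomputable def polyS456 : MvPolynomial (Fin 4) ℂ := polyF 3 * polyF 4 * polyF 5 + polyS * polyR2
noncomputable def polyS3456 : MvPolynomial (Fin 4) ℂ :=
  polyF 2 * polyF 3 * polyF 4 * polyF 5 + polyS * polyR
noncomputable def polyS23456 : MvPolynomial (Fin 4) ℂ :=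
  polyF 1 * polyF 2 * polyF 3 * polyF 4 * polyF 5 + polyR1 * polyS * polyR
/-- The sextic `F₁·S₂,₃,₄,₅,₆ − S³`. -/
noncomputable def polySextic8 : MvPolynomial (Fin 4) ℂ := polyF 0 * polyS23456 - polyS ^ 3

section CriticalPoints

variable {σ A R R' : Type*} [CommSemiring A]

/-- A critical point of a polynomial `f`: a vector, with coordinates in any algebra over the
coefficients, at which all partial derivatives of `f` vanish. For a form these are the vectors
representing the singular points of the hypersurface `f = 0`. -/
def IsCriticalPt [CommSemiring R] [Algebra A R] (f : MvPolynomial σ A) (x : σ → R) : Prop :=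
  ∀ i, aeval x (pderiv i f) = 0

theorem IsCriticalPt.map [CommSemiring R] [Algebra A R] [CommSemiring R'] [Algebra A R']
    {f : MvPolynomial σ A} {x : σ → R} (h : IsCriticalPt f x) (φ : R →ₐ[A] R') :
    IsCriticalPt f (φ ∘ x) := fun i ↦ by
  rw [Function.comp_def, ← comp_aeval_apply, h i, map_zero]

theorem isCriticalPt_comp_iff [CommSemiring R] [Algebra A R] [CommSemiring R'] [Algebra A R']
    {f : MvPolynomial σ A} {x : σ → R} {φ : R →ₐ[A] R'} (hφ : Function.Injective φ) :
    IsCriticalPt f (φ ∘ x) ↔ IsCriticalPt f x := by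
  refine ⟨fun h i ↦ hφ ?_, fun h ↦ h.map φ⟩
  rw [comp_aeval_apply, map_zero]
  exact h i

theorem aeval_smul_of_isHomogeneous [CommSemiring R] [Algebra A R] {f : MvPolynomial σ A} {n : ℕ}
    (hf : f.IsHomogeneous n) (t : R) (x : σ → R) : aeval (t • x) f = t ^ n * aeval x f := by
  simp only [aeval_def, eval₂_eq, Pi.smul_apply, smul_eq_mul, mul_pow, Finset.prod_mul_distrib,
    Finset.prod_pow_eq_pow_sum, Finset.mul_sum]
  refine Finset.sum_congr rfl fun d hd ↦ ?_
  rw [hf.degree_eq_sum_deg_support hd]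
  ring

theorem IsCriticalPt.smul [CommSemiring R] [Algebra A R] {f : MvPolynomial σ A} {n : ℕ} {x : σ → R}
    (h : IsCriticalPt f x) (hf : f.IsHomogeneous n) (t : R) : IsCriticalPt f (t • x) := fun i ↦ by
  rw [aeval_smul_of_isHomogeneous hf.pderiv, h i, mul_zero]

theorem isCriticalPt_map_algebraMap [CommSemiring R] [Algebra A R] {f : MvPolynomial σ A}
    {x : σ → R} :
    IsCriticalPt (f.map (algebraMap A R)) x ↔ IsCriticalPt f x := by
  simp only [IsCriticalPt, pderiv_map, aeval_map_algebraMap]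

end CriticalPoints

section Places

variable {K : Type*} [Field K]

theorem exists_valuationSubring_residueField_charP [CharZero K] (p : ℕ) [hp : Fact p.Prime] :
    ∃ B : ValuationSubring K, CharP (IsLocalRing.ResidueField B) p := by
  let A : Subring K := (Int.castRingHom K).range
  have hpA : Ideal.span {(p : A)} ≠ ⊤ := by
    rw [Ne, Ideal.span_singleton_eq_top]
    intro h
    obtain ⟨⟨_, n, rfl⟩, hn⟩ := h.exists_right_inv
    have hpn : (p : K) * n = 1 := congrArg Subtype.val hn
    exact (Nat.prime_iff_prime_int.mp hp.out).not_isUnit (.of_mul_eq_one n (mod_cast hpn))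
  obtain ⟨B, -, hB⟩ := Ideal.image_subset_nonunits_valuationSubring _ hpA
  refine ⟨B, (CharP.charP_iff_prime_eq_zero hp.out).mpr ?_⟩
  obtain ⟨_, hpB⟩ := ValuationSubring.mem_nonunits_iff_exists_mem_maximalIdeal.mp
    (hB ⟨(p : A), Ideal.mem_span_singleton_self _, rfl⟩)
  rw [← map_natCast (IsLocalRing.residue B), IsLocalRing.residue_eq_zero_iff]
  exact hpB

theorem exists_smul_primitive {ι : Type*} [Finite ι] (B : ValuationSubring K) {x : ι → K}
    (hx : x ≠ 0) :
    ∃ t : K, t ≠ 0 ∧ ∃ z : ι → B, (fun i ↦ (z i : K)) = t • x ∧ IsLocalRing.residue B ∘ z ≠ 0 := by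
  obtain ⟨k, hk⟩ := Function.ne_iff.mp hx
  have : Nonempty ι := ⟨k⟩
  obtain ⟨j, hj⟩ := Finite.exists_max fun i ↦ B.valuation (x i)
  have hxj : x j ≠ 0 := by
    rw [Pi.zero_apply, ← B.valuation.ne_zero_iff] at hk
    exact B.valuation.ne_zero_iff.mp ((zero_lt_iff.mpr hk).trans_le (hj k)).ne'
  have hmem (i : ι) : (x j)⁻¹ * x i ∈ B := by
    rw [← B.valuation_le_one_iff, map_mul, map_inv₀]
    exact inv_mul_le_one_of_le₀ (hj i) zero_le
  refine ⟨(x j)⁻¹, inv_ne_zero hxj, fun i ↦ ⟨_, hmem i⟩, rfl, Function.ne_iff.mpr ⟨j, ?_⟩⟩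
  simp only [Function.comp_apply, inv_mul_cancel₀ hxj, Pi.zero_apply]
  exact (map_one (IsLocalRing.residue B)).trans_ne one_ne_zero

end Places

section ContactSextics

variable {R : Type*} [CommRing R] {Q : MvPolynomial (Fin 4) ℤ} {x : Fin 4 → R}

/-- The quadric form `S = y₀y₁ − y₂y₃` with integer coefficients. -/
noncomputable def quadric : MvPolynomial (Fin 4) ℤ := X 0 * X 1 - X 2 * X 3

/-- The sextic form `y₀Q − S³` attached to a quintic form `Q`. -/
noncomputable def contactSextic (Q : MvPolynomial (Fin 4) ℤ) : MvPolynomial (Fin 4) ℤ :=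
  X 0 * Q - quadric ^ 3

theorem isHomogeneous_quadric : quadric.IsHomogeneous 2 :=
  ((isHomogeneous_X _ _).mul (isHomogeneous_X _ _)).sub
    ((isHomogeneous_X _ _).mul (isHomogeneous_X _ _))

theorem isHomogeneous_contactSextic (hQ : Q.IsHomogeneous 5) :
    (contactSextic Q).IsHomogeneous 6 :=
  ((isHomogeneous_X _ _).mul hQ).sub (isHomogeneous_quadric.pow 3)

theorem aeval_quadric (x : Fin 4 → R) : aeval x quadric = x 0 * x 1 - x 2 * x 3 := by
  simp only [quadric, map_sub, map_mul, aeval_X]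

theorem aeval_pderiv_quadric (x : Fin 4 → R) (i : Fin 4) :
    aeval x (pderiv i quadric) = ![x 1, x 0, -x 3, -x 2] i := by
  fin_cases i <;> simp [quadric, pderiv_X]

theorem aeval_pderiv_contactSextic (Q : MvPolynomial (Fin 4) ℤ) (x : Fin 4 → R) (i : Fin 4) :
    aeval x (pderiv i (contactSextic Q)) = (Pi.single 0 (aeval x Q) : Fin 4 → R) i +
      x 0 * aeval x (pderiv i Q) - 3 * aeval x quadric ^ 2 * ![x 1, x 0, -x 3, -x 2] i := by
  rw [← aeval_pderiv_quadric, contactSextic, map_sub, pderiv_mul, pderiv_pow, pderiv_X]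
  obtain rfl | hi := eq_or_ne i 0
  · simp
  · simp [hi]

theorem isCriticalPt_contactSextic (h0 : x 0 = 0) (hQ : aeval x Q = 0)
    (hS : aeval x quadric = 0) : IsCriticalPt (contactSextic Q) x := fun i ↦ by
  simp [aeval_pderiv_contactSextic, h0, hQ, hS]

theorem IsCriticalPt.aeval_eq_zero_of_contactSextic [IsDomain R] (h3 : (3 : R) ≠ 0)
    (h : IsCriticalPt (contactSextic Q) x) (h0 : x 0 = 0) :
    aeval x Q = 0 ∧ aeval x quadric = 0 := by
  have hS : aeval x quadric = 0 := by
    have hd2 : aeval x quadric = 0 ∨ x 3 = 0 := by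
      simpa [aeval_pderiv_contactSextic, h0, h3] using h 2
    exact hd2.elim id fun hx3 ↦ by simp [aeval_quadric, h0, hx3]
  exact ⟨by simpa [aeval_pderiv_contactSextic, h0, hS] using h 0, hS⟩

theorem IsCriticalPt.eq_zero_of_map_eq_zero {B : Type*} [CommRing B] [IsDomain B] {z : Fin 4 → B}
    (h : IsCriticalPt (contactSextic Q) z) (φ : B →ₐ[ℤ] R) (h0 : φ (z 0) = 0)
    (hQ : (φ (z 2) + φ (z 3)) * aeval (φ ∘ z) (pderiv 1 Q) ≠ 0) : z 0 = 0 := by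
  set w := (z 2 + z 3) * aeval z (pderiv 1 Q) +
    z 0 * (aeval z (pderiv 2 Q) + aeval z (pderiv 3 Q)) with hw
  have hzw : z 0 * w = 0 := by
    have hd1 : z 0 * aeval z (pderiv 1 Q) - 3 * aeval z quadric ^ 2 * z 0 = 0 := by
      simpa [aeval_pderiv_contactSextic] using h 1
    have hd2 : z 0 * aeval z (pderiv 2 Q) + 3 * aeval z quadric ^ 2 * z 3 = 0 := by
      simpa [aeval_pderiv_contactSextic] using h 2
    have hd3 : z 0 * aeval z (pderiv 3 Q) + 3 * aeval z quadric ^ 2 * z 2 = 0 := by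
      simpa [aeval_pderiv_contactSextic] using h 3
    linear_combination (z 2 + z 3) * hd1 + z 0 * (hd2 + hd3)
  have hφw : φ w ≠ 0 := by
    simpa [hw, h0, comp_aeval_apply, Function.comp_def] using hQ
  exact (mul_eq_zero.mp hzw).resolve_right fun hw0 ↦ hφw (by rw [hw0, map_zero])

end ContactSextics

section LinearForms

variable {σ R : Type*} [Fintype σ] [CommRing R]

/-- The linear form with integer coefficients `a`. -/
noncomputable def linearForm (a : σ → ℤ) : MvPolynomial σ ℤ := ∑ i, C (a i) * X i

theorem isHomogeneous_linearForm (a : σ → ℤ) : (linearForm a).IsHomogeneous 1 :=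
  .sum _ _ _ fun i _ ↦ isHomogeneous_C_mul_X (a i) i

theorem aeval_linearForm (a : σ → ℤ) (x : σ → R) : aeval x (linearForm a) = ∑ i, a i * x i := by
  simp [linearForm]

theorem pderiv_linearForm (a : σ → ℤ) (i : σ) : pderiv i (linearForm a) = C (a i) := by
  classical
  simp [linearForm, pderiv_X, Pi.single_apply]

end LinearForms

section Quintic

/-- The quadric form `R = y₀² + y₁² + y₂² + y₃²` with integer coefficients. -/
noncomputable def sumSquares : MvPolynomial (Fin 4) ℤ := X 0 ^ 2 + X 1 ^ 2 + X 2 ^ 2 + X 3 ^ 2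

/-- The product `F₂F₃F₄F₅F₆` with integer coefficients. -/
noncomputable def fivePlanes : MvPolynomial (Fin 4) ℤ :=
  linearForm ![0, 1, 0, 0] * linearForm ![4, 1, -2, -2] * linearForm ![1, 4, -2, -2] *
    linearForm ![1, 1, 1, 1] * linearForm ![1, 1, -1, -1]

/-- The quintic form `S₂,₃,₄,₅,₆ = F₂F₃F₄F₅F₆ + R₁SR` with integer coefficients. -/
noncomputable def quintic : MvPolynomial (Fin 4) ℤ :=
  fivePlanes + linearForm ![1, 4, 2, 3] * quadric * sumSquares

theorem aeval_sumSquares {R : Type*} [CommRing R] (x : Fin 4 → R) :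
    aeval x sumSquares = x 0 ^ 2 + x 1 ^ 2 + x 2 ^ 2 + x 3 ^ 2 := by
  simp only [sumSquares, map_add, map_pow, aeval_X]

theorem aeval_pderiv_sumSquares {R : Type*} [CommRing R] (x : Fin 4 → R) (i : Fin 4) :
    aeval x (pderiv i sumSquares) = 2 * x i := by
  fin_cases i <;> simp [sumSquares, pderiv_X]

theorem isHomogeneous_quintic : quintic.IsHomogeneous 5 := by
  have hF (a : Fin 4 → ℤ) := isHomogeneous_linearForm a
  have hX (i : Fin 4) := isHomogeneous_X_pow (R := ℤ) i 2
  exact (((((hF _).mul (hF _)).mul (hF _)).mul (hF _)).mul (hF _)).add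
    (((hF _).mul isHomogeneous_quadric).mul ((((hX 0).add (hX 1)).add (hX 2)).add (hX 3)))

variable {K : Type*} [Field K] {x : Fin 4 → K}

/-- The restriction of `S₂,₃,₄,₅,₆` to the lines `y₀ = y₂y₃ = 0`, written in terms of `b = y₁` and
`t = y₂ + y₃`. -/
def binaryQuintic (b t : K) : K := b * (b - 2 * t) * (4 * b - 2 * t) * (b + t) * (b - t)

theorem binaryQuintic_eq_zero_iff (h2 : (2 : K) ≠ 0) {b t : K} :
    binaryQuintic b t = 0 ↔ b = 0 ∨ b = 2 * t ∨ 2 * b = t ∨ b = -t ∨ b = t := by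
  have h : (4 * b - 2 * t) = 2 * (2 * b - t) := by ring
  simp only [binaryQuintic, h, mul_eq_zero, h2, sub_eq_zero, add_eq_zero_iff_eq_neg, false_or,
    or_assoc]

theorem binaryQuintic_div_one (b : K) {t : K} (ht : t ≠ 0) :
    binaryQuintic (b / t) 1 = binaryQuintic b t / t ^ 5 := by
  simp only [binaryQuintic]
  field_simp

theorem aeval_quintic_of_eq_zero (h0 : x 0 = 0) (hS : aeval x quadric = 0) :
    aeval x quintic = binaryQuintic (x 1) (x 2 + x 3) := by
  simp only [quintic, fivePlanes, binaryQuintic, map_add, map_mul, hS, mul_zero, zero_mul, add_zero,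
    aeval_linearForm, Fin.sum_univ_four, h0, Matrix.cons_val, Matrix.cons_val_zero,
    Matrix.cons_val_one, Int.cast_zero, Int.cast_one, Int.cast_ofNat, Int.cast_neg]
  ring

theorem aeval_pderiv_one_quintic_of_eq_zero (h0 : x 0 = 0) (hS : aeval x quadric = 0) :
    aeval x (pderiv 1 quintic) = 20 * x 1 ^ 4 - 40 * x 1 ^ 3 * (x 2 + x 3) +
      20 * x 1 * (x 2 + x 3) ^ 3 - 4 * (x 2 + x 3) ^ 4 := by
  simp only [quintic, fivePlanes, map_add, map_mul, Derivation.leibniz, smul_eq_mul, hS, mul_zero,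
    zero_mul, add_zero, zero_add, aeval_linearForm, pderiv_linearForm, aeval_pderiv_quadric,
    Fin.sum_univ_four, h0, Matrix.cons_val, Matrix.cons_val_zero, Matrix.cons_val_one,
    Int.cast_zero, Int.cast_one, Int.cast_ofNat, Int.cast_neg, map_one, map_ofNat]
  ring

theorem add_ne_zero_of_aeval_quintic_eq_zero (h2 : (2 : K) ≠ 0) (hx : x ≠ 0) (h0 : x 0 = 0)
    (hQ : aeval x quintic = 0) (hS : aeval x quadric = 0) : x 2 + x 3 ≠ 0 := by
  intro ht
  have h1 : x 1 = 0 := by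
    simpa [aeval_quintic_of_eq_zero h0 hS, ht, binaryQuintic_eq_zero_iff h2, h2] using hQ
  have h23 : x 2 = 0 ∧ x 3 = 0 := by
    rw [aeval_quadric, h0] at hS
    grind
  exact hx (funext fun i ↦ by fin_cases i <;> simp [h0, h1, h23])

theorem aeval_pderiv_one_quintic_ne_zero (h2 : (2 : K) ≠ 0) (h3 : (3 : K) ≠ 0) (hx : x ≠ 0)
    (h0 : x 0 = 0) (hQ : aeval x quintic = 0) (hS : aeval x quadric = 0) :
    aeval x (pderiv 1 quintic) ≠ 0 := by
  have ht := add_ne_zero_of_aeval_quintic_eq_zero h2 hx h0 hQ hS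
  rw [aeval_quintic_of_eq_zero h0 hS, binaryQuintic_eq_zero_iff h2] at hQ
  rw [aeval_pderiv_one_quintic_of_eq_zero h0 hS]
  generalize x 1 = b at hQ ⊢
  generalize x 2 + x 3 = t at hQ ht ⊢
  -- At the five roots the derivative is `-4t⁴`, `36t⁴`, `36b⁴`, `36t⁴`, `-4t⁴`.
  have h36 : (2 * 3 * t ^ 2) ^ 2 ≠ 0 :=
    pow_ne_zero 2 (mul_ne_zero (mul_ne_zero h2 h3) (pow_ne_zero 2 ht))
  rcases hQ with rfl | rfl | rfl | rfl | rfl <;> grind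

end Quintic

section BaseLocus

variable {K : Type*} [Field K]

/-- The vectors `(0, r, 1, 0)` and `(0, r, 0, 1)`, which represent the points of the base
locus when `r` runs through the roots of `binaryQuintic r 1`. The Boolean `u.1` selects the line. -/
def baseVec (u : Bool × K) : Fin 4 → K :=
  bif u.1 then ![0, u.2, 1, 0] else ![0, u.2, 0, 1]

theorem baseVec_ne_zero (u : Bool × K) : baseVec u ≠ 0 := by
  obtain ⟨_ | _, r⟩ := u <;> simp [baseVec, funext_iff, Fin.forall_fin_succ]

/-- The point of `ℙ³` represented by `baseVec u`. -/
def basePoint (u : Bool × K) : Projectivization K (Fin 4 → K) :=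
  .mk K (baseVec u) (baseVec_ne_zero u)

theorem basePoint_injective : Function.Injective (basePoint (K := K)) := by
  intro u v huv
  obtain ⟨a, ha⟩ := (Projectivization.mk_eq_mk_iff' K _ _ _ _).mp huv
  have ha (i : Fin 4) := congrFun ha i
  obtain ⟨_ | _, r⟩ := u <;> obtain ⟨_ | _, s⟩ := v <;>
  simp_all [baseVec, Fin.forall_fin_succ]

/-- The base locus `y₀ = S₂,₃,₄,₅,₆ = S = 0` in `ℙ³`. -/
def baseLocus (K : Type*) [Field K] : Set (Projectivization K (Fin 4 → K)) :=
  {p | ∃ (x : Fin 4 → K) (hx : x ≠ 0), Projectivization.mk K x hx = p ∧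
    x 0 = 0 ∧ aeval x quintic = 0 ∧ aeval x quadric = 0}

theorem baseLocus_eq_image (h2 : (2 : K) ≠ 0) :
    baseLocus K = basePoint '' (Set.univ ×ˢ {r | binaryQuintic r 1 = 0}) := by
  ext p
  constructor
  · rintro ⟨x, hx, rfl, h0, hQ, hS⟩
    have ht := add_ne_zero_of_aeval_quintic_eq_zero h2 hx h0 hQ hS
    have hr : binaryQuintic (x 1 / (x 2 + x 3)) 1 = 0 := by
      rw [binaryQuintic_div_one _ ht, ← aeval_quintic_of_eq_zero h0 hS, hQ, zero_div]
    have h23 : x 2 = 0 ∨ x 3 = 0 := by simpa [aeval_quadric, h0] using hS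
    obtain ⟨u, hu⟩ : ∃ u, (x 2 + x 3)⁻¹ • x = baseVec (u, x 1 / (x 2 + x 3)) := by
      rcases h23 with h | h
      · refine ⟨false, ?_⟩
        rw [h, zero_add] at ht ⊢
        ext i
        fin_cases i <;> simp [baseVec, h0, h, ht, div_eq_inv_mul]
      · refine ⟨true, ?_⟩
        rw [h, add_zero] at ht ⊢
        ext i
        fin_cases i <;> simp [baseVec, h0, h, ht, div_eq_inv_mul]
    exact ⟨(u, _), ⟨trivial, hr⟩, (Projectivization.mk_eq_mk_iff' K _ _ _ _).mpr ⟨_, hu⟩⟩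
  · rintro ⟨u, ⟨-, hu⟩, rfl⟩
    have hS : aeval (baseVec u) quadric = 0 := by
      obtain ⟨_ | _, r⟩ := u <;> simp [baseVec, aeval_quadric]
    have h0 : baseVec u 0 = 0 := by
      obtain ⟨_ | _, r⟩ := u <;> simp [baseVec]
    refine ⟨_, baseVec_ne_zero u, rfl, h0, ?_, hS⟩
    rw [aeval_quintic_of_eq_zero h0 hS]
    obtain ⟨_ | _, r⟩ := u <;> simpa [baseVec] using hu

theorem ncard_binaryQuintic_roots (h2 : (2 : K) ≠ 0) (h3 : (3 : K) ≠ 0) :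
    {r : K | binaryQuintic r 1 = 0}.ncard = 5 := by
  classical
  have hroots : {r : K | binaryQuintic r 1 = 0} = ↑({0, 2, 2⁻¹, -1, 1} : Finset K) := by
    ext r
    simp [binaryQuintic_eq_zero_iff h2, ← mul_eq_one_iff_eq_inv₀ h2, mul_comm]
  rw [hroots, Set.ncard_coe_finset]
  repeat rw [Finset.card_insert_of_notMem (by grind)]
  rw [Finset.card_singleton]

theorem ncard_baseLocus (h2 : (2 : K) ≠ 0) (h3 : (3 : K) ≠ 0) :
    (baseLocus K).ncard = 10 := by
  rw [baseLocus_eq_image h2, Set.ncard_image_of_injective _ basePoint_injective,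
    Set.ncard_prod, Set.ncard_univ, ncard_binaryQuintic_roots h2 h3]
  simp

end BaseLocus

section CharNineteen

variable {R : Type*} [CommRing R]

/-- The value at `x` of the polynomial with coefficients `a`, listed from the constant term up. -/
def horner (x : R) (a : List R) : R := a.foldr (fun r s ↦ r + x * s) 0

/-- The coefficients of the polynomials `cₖᵢ(c, d)` in `cofactor`: the entry at `k, i` lists, for
increasing powers of `c`, the coefficients of increasing powers of `d`. -/
def cofactorCoeff : Fin 5 → Fin 4 → List (List ℤ) :=
  ![![[[0, 0, 7, 7, 1, -5, 7, 1, -7, 5], [-6, -3, 6, 0, 5, -2, -1, -3, -2, -7],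
       [-8, -2, 8, -6, -7, -5, -2, -1], [0, 4, 5, -2, 2, 0, -4]],
      [[4, -9, 8, 5, 6, -9, 3, -5, 1], [9, 0, -3, 0, -6, -8, -3, 0, -1, -6],
       [4, 0, 3, 1, -5, 9, 0, -2, 5, 4], [8, 2, -7, -1, -5, 4, 7, 9]],
      [[3, 3, 0, -9, 0, -7, -6, 3, 5], [-2, 5, 9, 4, -1, -1, -1, 6, 1, -8],
       [-6, -9, 8, -1, 5, 0, 1, -5, -9, -9], [0, -5, 4, -6, 6, -3, 9, -8],
       [5, 8, 4, 1, -3, -4, 2]],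
      [[-6, 0, 6, -5, 5, -2, -7, -9, 9, 2, -2], [2, 0, 8, 4, 4, 0, 6, -9, -8, -9, 9],
       [-9, 2, 3, -6, 8, 2, 4, 5, -7], [3, -5, -3, 0, 8, 2, 2, -3]]],
    ![[[-6, 5, -3, -2, -9, -3, -8, -7, 5], [7, 6, 9, 4, -2, -8, 9, 5],
       [-8, -6, 3, -2, 2, -5, -9], [2, 6, -9, -4, 7]],
      [[7, -4, 6, -2, 1, 1, -7, 7, 9, -1], [9, -7, -3, 4, 7, -6, 9, 3, -8, 9],
       [-9, 8, -6, 2, 6, -3, 6, 1], [-8, 2, -6, 9, -2, -5, -4]],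
      [[-5, 1, 0, 9, -2, -2, 9, -7, 0, -1], [-1, -1, 0, -5, 2, 3, -2, 6, -1],
       [6, 0, -4, -9, -5, -6, -6, 1], [1, -7, -3, 6, -3, -3, 9], [-6, 6, -8, -3, -7]],
      [[1, 6, -8, 6, -8, -3, 1, -2, 0, 4], [-3, -9, -5, -8, 8, 1, -8, 7, -5],
       [5, 0, -5, -8, -3, 3, -1, -5], [-5, 3, -3, 0, 2, 6]]],
    ![[[1, -6, -3, 3, 0, -4, -4, 3], [7, 9, 7, -7, 3, 1, 3], [2, 6, 0, 9, 1], [-7, -2, -7]],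
      [[2, 8, -3, 7, 0, 1, 6, -2, 7], [9, 3, 9, -4, 6, 0, -5], [-7, 4, -9, 8, 7, -1, 3],
       [-8, 0, -9, -9, -9]],
      [[3, -3, 5, 9, -2, -5, 0, 9, -9], [-3, -1, -7, -5, -6, 8, -1, 5], [4, -4, 2, -4, 2, 1, -4],
       [2, -8, -2, -6, -5], [9, 7, 9]],
      [[-3, 7, -8, -8, -2, 5, -6, -8, 5], [-7, -8, 0, 8, 9, -5, -2, -6], [0, 2, -5, 5, 2, -1],
       [3, 6, -2, 2, 3]]],
    ![[[0, 0, 0, 0, 0, 9, -6], [0, 0, -2], [0, -1]],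
      [[8, 5, -7, 5, -1, -8, -1, 9], [-6, 2, -4, 5, -6, 3, 9], [-1, -7, 1, -9, -8], [9, 8, 9]],
      [[-7, -6, -4, -1, 1, 1, 0, 4], [-9, 1, -5, -8, -3, -4, 5], [-5, 5, 2, 3, -5], [0, -5]],
      [[-7, 6, 4, -3, -3, -3, 5, 4], [-4, -1, 4, -5, -4, -3], [0, 1, -1, -6, -3], [0, 8]]],
    ![[],
      [[0, 0, 0, 0, 0, 2, 6], [], [0, 6]],
      [[0, 0, 0, 0, 0, 9, 2], [0, 0, 8], [0, -7]],
      [[0, 0, 0, 0, 0, -9], [0, 0, -5], [0, -8]]]]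

/-- The polynomials `cₖᵢ` of an identity `∑ₖᵢ bᵏ cₖᵢ(c, d) ∂ᵢf(1, b, c, d) = 1` in characteristic
`19`, where `f = y₀S₂,₃,₄,₅,₆ − S³`: a Nullstellensatz certificate that `f` has no critical point
off the plane `y₀ = 0`. It was found by linear algebra over `𝔽₁₉`; in every smaller prime
characteristic there are critical points off that plane. -/
def cofactor (c d : R) (k : Fin 5) (i : Fin 4) : R :=
  horner c ((cofactorCoeff k i).map fun a ↦ horner d (a.map (↑)))

theorem sum_cofactor_mul_aeval_pderiv [CharP R 19] (b c d : R) :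
    ∑ k : Fin 5, b ^ (k : ℕ) * ∑ i, cofactor c d k i *
      aeval ![1, b, c, d] (pderiv i (contactSextic quintic)) = 1 := by
  simp only [cofactor, cofactorCoeff, horner, List.map_cons, List.map_nil, List.foldr_cons,
    List.foldr_nil, Fin.sum_univ_five, Fin.sum_univ_four, aeval_pderiv_contactSextic, quintic,
    fivePlanes, map_add, map_mul, Derivation.leibniz, smul_eq_mul, aeval_linearForm,
    pderiv_linearForm, aeval_quadric, aeval_pderiv_quadric, aeval_sumSquares,
    aeval_pderiv_sumSquares, Matrix.cons_val, Matrix.cons_val_zero, Matrix.cons_val_one,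
    Pi.single_eq_same, Pi.single_eq_of_ne, ne_eq, Fin.reduceEq, one_ne_zero, not_false_eq_true,
    eq_intCast, map_intCast, Int.cast_ofNat, Int.cast_neg, Int.cast_zero, Int.cast_one,
    Int.reduceNeg, mul_zero, zero_mul, one_mul, mul_one, add_zero, zero_add,
    Fin.coe_ofNat_eq_mod, Nat.zero_mod, Nat.one_mod, Nat.reduceMod, Nat.mod_succ]
  grind

theorem IsCriticalPt.eq_zero_of_charP_nineteen {K : Type*} [Field K] [CharP K 19] {x : Fin 4 → K}
    (h : IsCriticalPt (contactSextic quintic) x) : x 0 = 0 := by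
  by_contra h0
  have hx : (x 0)⁻¹ • x = ![1, x 1 / x 0, x 2 / x 0, x 3 / x 0] := by
    ext i
    fin_cases i <;> simp [h0, div_eq_inv_mul]
  have hchart := h.smul (isHomogeneous_contactSextic isHomogeneous_quintic) (x 0)⁻¹
  rw [hx] at hchart
  refine zero_ne_one (α := K) ?_
  rw [← sum_cofactor_mul_aeval_pderiv (x 1 / x 0) (x 2 / x 0) (x 3 / x 0)]
  simp only [hchart _, mul_zero, Finset.sum_const_zero]

end CharNineteen

section SingularPoints

variable {K : Type*} [Field K] [CharZero K] {x : Fin 4 → K}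

theorem IsCriticalPt.eq_zero_of_charZero (hx : x ≠ 0)
    (h : IsCriticalPt (contactSextic quintic) x) : x 0 = 0 := by
  have : Fact (Nat.Prime 19) := ⟨by norm_num⟩
  obtain ⟨B, hB⟩ := exists_valuationSubring_residueField_charP (K := K) 19
  obtain ⟨t, ht, z, hz, hz0⟩ := exists_smul_primitive B hx
  let φ : B →ₐ[ℤ] IsLocalRing.ResidueField B := (IsLocalRing.residue B).toIntAlgHom
  have h2 : (2 : IsLocalRing.ResidueField B) ≠ 0 :=
    mt (CharP.cast_eq_zero_iff _ 19 2).mp (by norm_num)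
  have h3 : (3 : IsLocalRing.ResidueField B) ≠ 0 :=
    mt (CharP.cast_eq_zero_iff _ 19 3).mp (by norm_num)
  have hcrit : IsCriticalPt (contactSextic quintic) z := by
    refine (isCriticalPt_comp_iff (φ := B.subtype.toIntAlgHom) Subtype.val_injective).mp ?_
    change IsCriticalPt (contactSextic quintic) fun i ↦ (z i : K)
    exact hz ▸ h.smul (isHomogeneous_contactSextic isHomogeneous_quintic) t
  have hred := hcrit.map φ
  have hφ0 : (φ ∘ z) 0 = 0 := hred.eq_zero_of_charP_nineteen
  obtain ⟨hQ, hS⟩ := hred.aeval_eq_zero_of_contactSextic h3 hφ0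
  have hz00 : z 0 = 0 := hcrit.eq_zero_of_map_eq_zero φ hφ0 <|
    mul_ne_zero (add_ne_zero_of_aeval_quintic_eq_zero h2 hz0 hφ0 hQ hS)
      (aeval_pderiv_one_quintic_ne_zero h2 h3 hz0 hφ0 hQ hS)
  have htx : t * x 0 = 0 := by
    rw [← smul_eq_mul, ← Pi.smul_apply, ← congrFun hz 0, hz00, ZeroMemClass.coe_zero]
  exact (mul_eq_zero.mp htx).resolve_left ht

theorem isCriticalPt_contactSextic_quintic_iff (hx : x ≠ 0) :
    IsCriticalPt (contactSextic quintic) x ↔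
      x 0 = 0 ∧ aeval x quintic = 0 ∧ aeval x quadric = 0 := by
  refine ⟨fun h ↦ ?_, fun ⟨h0, hQ, hS⟩ ↦ isCriticalPt_contactSextic h0 hQ hS⟩
  have h0 := h.eq_zero_of_charZero hx
  exact ⟨h0, h.aeval_eq_zero_of_contactSextic three_ne_zero h0⟩

/-- The points of `ℙ³` represented by critical points of a polynomial in four variables. For a form
of positive degree invertible in `K` this is the singular locus of its zero surface. -/
def singularLocus (K : Type*) [Field K] (f : MvPolynomial (Fin 4) ℤ) :
    Set (Projectivization K (Fin 4 → K)) :=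
  {p | ∃ (x : Fin 4 → K) (hx : x ≠ 0), Projectivization.mk K x hx = p ∧ IsCriticalPt f x}

variable (K) in
theorem sing_sextic8_eq_and_card_general :
    singularLocus K (contactSextic quintic) = baseLocus K ∧
      (singularLocus K (contactSextic quintic)).ncard = 10 := by
  have hlocus : singularLocus K (contactSextic quintic) = baseLocus K :=
    Set.ext fun _ ↦ exists_congr fun _ ↦ exists_congr fun hx ↦
      and_congr_right fun _ ↦ isCriticalPt_contactSextic_quintic_iff hx
  exact ⟨hlocus, hlocus ▸ ncard_baseLocus two_ne_zero three_ne_zero⟩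

end SingularPoints

section ComplexModel

theorem map_quadric : quadric.map (algebraMap ℤ ℂ) = polyS := by
  simp [quadric, polyS]

theorem map_quintic : quintic.map (algebraMap ℤ ℂ) = polyS23456 := by
  have hS : quadric.map (Int.castRingHom ℂ) = polyS := map_quadric
  simp [quintic, fivePlanes, sumSquares, hS, linearForm, Fin.sum_univ_four, polyS23456, polyF,
    polyR, polyR1]
  ring

theorem map_contactSextic_quintic :
    (contactSextic quintic).map (algebraMap ℤ ℂ) = polySextic8 := by
  rw [contactSextic, map_sub, map_mul, map_pow, map_quadric, map_quintic, map_X]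
  rfl

theorem isCriticalPt_iff_eval_pderiv_polySextic8 (x : Fin 4 → ℂ) :
    IsCriticalPt (contactSextic quintic) x ↔ ∀ i, eval x (pderiv i polySextic8) = 0 := by
  rw [← isCriticalPt_map_algebraMap, map_contactSextic_quintic]
  rfl

theorem eval_polyS (x : Fin 4 → ℂ) : eval x polyS = aeval x quadric := by
  rw [← map_quadric, ← coe_aeval_eq_eval, RingHom.coe_coe, aeval_map_algebraMap]

theorem eval_polyS23456 (x : Fin 4 → ℂ) : eval x polyS23456 = aeval x quintic := by
  rw [← map_quintic, ← coe_aeval_eq_eval, RingHom.coe_coe, aeval_map_algebraMap]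

end ComplexModel

/-- The singular locus of the sextic `F₁·S₂,₃,₄,₅,₆ − S³ = 0` in `ℙ³(ℂ)` is exactly
the set `{F₁ = S₂,₃,₄,₅,₆ = S = 0}`, which consists of exactly `10` points. -/
theorem sing_sextic8_eq_and_card :
    {p : Projectivization ℂ (Fin 4 → ℂ) |
        ∃ (x : Fin 4 → ℂ) (hx : x ≠ 0), Projectivization.mk ℂ x hx = p ∧
          ∀ i : Fin 4, eval x (pderiv i polySextic8) = 0}
      = {p : Projectivization ℂ (Fin 4 → ℂ) |
          ∃ (x : Fin 4 → ℂ) (hx : x ≠ 0), Projectivization.mk ℂ x hx = p ∧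
            eval x (polyF 0) = 0 ∧ eval x polyS23456 = 0 ∧ eval x polyS = 0} ∧
    {p : Projectivization ℂ (Fin 4 → ℂ) |
        ∃ (x : Fin 4 → ℂ) (hx : x ≠ 0), Projectivization.mk ℂ x hx = p ∧
          ∀ i : Fin 4, eval x (pderiv i polySextic8) = 0}.ncard = 10 := by
  simp only [← isCriticalPt_iff_eval_pderiv_polySextic8, eval_polyS, eval_polyS23456, polyF,
    Matrix.cons_val_zero, eval_X]
  exact sing_sextic8_eq_and_card_general ℂ
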